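/- arXiv:2604.11718 — 2 statements merged into one kernel-verified Lean document; each statement's English description precedes it below -/
import Mathlib

section
/- Let ν ∈ (0,1/2]. The infimum, over all smooth not identically zero functions u : (0,π/2) × ℝ → ℂ that are 2π-periodic in the second variable θ and have finite magnetic energy, of the quotient Q[u] = (∫₀^{2π} ∫₀^{π/2} (|∂_r u(r,θ)|² + |∂_θ u(r,θ) − iν u(r,θ)|²/sin²(r)) sin(r) dr dθ) / (∫₀^{2π} ∫₀^{π/2} |u(r,θ)|² sin(r) dr dθ) equals ν(ν+1), attained by u(r,θ) = (sin r)^ν. -/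
open MeasureTheory Real Set Filter

/-- The integrand of the magnetic energy in geodesic polar coordinates `(r, θ)`
on the round sphere, for the Aharonov–Bohm potential `A = ν dθ`. -/
noncomputable def magEnergyIntegrand (ν : ℝ) (u : ℝ → ℝ → ℂ) (p : ℝ × ℝ) : ℝ :=
  (‖deriv (fun s => u s p.2) p.1‖ ^ 2
      + ‖deriv (fun t => u p.1 t) p.2 - Complex.I * (ν : ℂ) * u p.1 p.2‖ ^ 2
          / Real.sin p.1 ^ 2)
    * Real.sin p.1

/-- Admissible functions on the polar coordinate rectangle `(0, R) × ℝ`: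
smooth, `2π`-periodic in `θ`, not identically zero, with finite magnetic energy
(and finite `L²`-norm). -/
def MagAdmissible (R ν : ℝ) (u : ℝ → ℝ → ℂ) : Prop :=
  ContDiffOn ℝ (⊤ : ℕ∞) (Function.uncurry u) (Ioo 0 R ×ˢ (univ : Set ℝ)) ∧
  (∀ r θ, u r (θ + 2 * π) = u r θ) ∧
  (¬ ∀ r ∈ Ioo (0:ℝ) R, ∀ θ : ℝ, u r θ = 0) ∧
  IntegrableOn (magEnergyIntegrand ν u) (Ioo 0 R ×ˢ Ioo 0 (2 * π)) ∧
  IntegrableOn (fun p : ℝ × ℝ => ‖u p.1 p.2‖ ^ 2 * Real.sin p.1)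
    (Ioo 0 R ×ˢ Ioo 0 (2 * π))

/-- The magnetic Rayleigh quotient in polar coordinates. -/
noncomputable def magQuot (R ν : ℝ) (u : ℝ → ℝ → ℂ) : ℝ :=
  (∫ p in Ioo (0:ℝ) R ×ˢ Ioo (0:ℝ) (2 * π), magEnergyIntegrand ν u p) /
    ∫ p in Ioo (0:ℝ) R ×ˢ Ioo (0:ℝ) (2 * π), ‖u p.1 p.2‖ ^ 2 * Real.sin p.1


lemma ang_ineq (ν : ℝ) (hν : ν ∈ Ioc (0:ℝ) (1/2)) (g g' : ℝ → ℂ)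
    (hg : ∀ t, HasDerivAt g (g' t) t) (hg' : Continuous g') (hp : g (2 * π) = g 0) :
    ν ^ 2 * ∫ t in (0:ℝ)..(2 * π), ‖g t‖ ^ 2 ≤
      ∫ t in (0:ℝ)..(2 * π), ‖g' t - Complex.I * (ν : ℂ) * g t‖ ^ 2 := by
  have hab : (0:ℝ) < 2 * π := by positivity
  have hgc : Continuous g := continuous_iff_continuousAt.2 fun t => (hg t).continuousAt
  have hmem : ∀ f : ℝ → ℂ, Continuous f → MemLp f 2 (volume.restrict (Ioc 0 (2 * π))) := by
    intro f hf
    obtain ⟨C, hC⟩ := (isCompact_Icc (a := (0:ℝ)) (b := 2 * π)).exists_bound_of_continuousOn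
      hf.continuousOn
    refine MemLp.of_bound hf.aestronglyMeasurable C ?_
    filter_upwards [ae_restrict_mem measurableSet_Ioc] with x hx
    exact hC x (Ioc_subset_Icc_self hx)
  have hc1 : ∀ n : ℤ, fourierCoeffOn hab g' n = Complex.I * n * fourierCoeffOn hab g n := by
    intro n
    rcases eq_or_ne n 0 with rfl | hn
    · rw [fourierCoeffOn_eq_integral]
      have : ∫ x in (0:ℝ)..(2*π), g' x = 0 := by
        rw [intervalIntegral.integral_eq_sub_of_hasDerivAt (fun x _ => hg x)
          (hg'.intervalIntegrable _ _), hp, sub_self]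
      simp [this]
    · rw [fourierCoeffOn_of_hasDerivAt hab hn (fun x _ => hg x) (hg'.intervalIntegrable _ _), hp]
      have h1 : (n : ℂ) ≠ 0 := by exact_mod_cast hn
      have h2 : (π : ℂ) ≠ 0 := by exact_mod_cast pi_ne_zero
      have h3 := Complex.I_ne_zero
      push_cast
      field_simp
      ring
  have hc2 : ∀ n : ℤ, fourierCoeffOn hab (fun t => g' t - Complex.I * (ν : ℂ) * g t) n
      = Complex.I * (n - ν) * fourierCoeffOn hab g n := by
    intro n
    have : fourierCoeffOn hab (fun t => g' t - Complex.I * (ν : ℂ) * g t) n =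
        fourierCoeffOn hab g' n - fourierCoeffOn hab (fun t => Complex.I * (ν : ℂ) * g t) n := by
      simp only [fourierCoeffOn_eq_integral]
      rw [← smul_sub, ← intervalIntegral.integral_sub]
      · simp only [smul_sub]
      · apply Continuous.intervalIntegrable
        exact ((map_continuous (fourier (-n))).comp (AddCircle.continuous_mk' _)).smul hg'
      · apply Continuous.intervalIntegrable
        exact ((map_continuous (fourier (-n))).comp (AddCircle.continuous_mk' _)).smul
          (by fun_prop)
    rw [this, fourierCoeffOn.const_mul, hc1]; ring
  have s1 := hasSum_sq_fourierCoeffOn hab (hmem g hgc)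
  have s2 := hasSum_sq_fourierCoeffOn hab (hmem (fun t => g' t - Complex.I * (ν : ℂ) * g t)
    (by fun_prop))
  have hle := hasSum_le (fun n : ℤ => ?_) (s1.mul_left (ν ^ 2)) s2
  · simp only [smul_eq_mul, sub_zero] at hle
    have h0 : 0 < (2 * π)⁻¹ := by positivity
    rw [mul_left_comm] at hle
    exact le_of_mul_le_mul_left hle h0
  · show ν ^ 2 * ‖fourierCoeffOn hab g n‖ ^ 2 ≤ _
    rw [hc2, norm_mul, norm_mul, Complex.norm_I, one_mul, mul_pow]
    gcongr
    · exact hν.1.le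
    have : ((n:ℂ) - (ν:ℂ)) = (((n:ℝ) - ν : ℝ) : ℂ) := by push_cast; rfl
    rw [this, Complex.norm_real, Real.norm_eq_abs, le_abs]
    rcases le_or_gt n 0 with h | h
    · right
      have : (n:ℝ) ≤ 0 := by exact_mod_cast h
      linarith
    · left
      have : (1:ℝ) ≤ n := by exact_mod_cast h
      linarith [hν.2]

lemma rad_ineq (ν : ℝ) (hν : 0 < ν) (f f' : ℝ → ℂ)
    (hf : ∀ r ∈ Ioo 0 (π/2), HasDerivAt f (f' r) r)
    (h1 : IntegrableOn (fun r => ‖f' r‖ ^ 2 * sin r) (Ioo 0 (π/2)))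
    (h2 : IntegrableOn (fun r => ‖f r‖ ^ 2 / sin r) (Ioo 0 (π/2)))
    (h3 : IntegrableOn (fun r => ‖f r‖ ^ 2 * sin r) (Ioo 0 (π/2))) :
    ν * (ν + 1) * ∫ r in Ioo 0 (π/2), ‖f r‖ ^ 2 * sin r ≤
      (∫ r in Ioo 0 (π/2), ‖f' r‖ ^ 2 * sin r) + ν ^ 2 * ∫ r in Ioo 0 (π/2), ‖f r‖ ^ 2 / sin r := by
  set D : ℝ → ℝ := fun r => ‖f' r‖ ^ 2 * sin r + ν ^ 2 * (‖f r‖ ^ 2 / sin r)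
    - ν * (ν + 1) * (‖f r‖ ^ 2 * sin r) with hD
  have hDi : IntegrableOn D (Ioo 0 (π/2)) := (h1.add (h2.const_mul _)).sub (h3.const_mul _)
  have hDint : ∫ r in Ioo 0 (π/2), D r = (∫ r in Ioo 0 (π/2), ‖f' r‖ ^ 2 * sin r)
      + ν ^ 2 * (∫ r in Ioo 0 (π/2), ‖f r‖ ^ 2 / sin r)
      - ν * (ν + 1) * ∫ r in Ioo 0 (π/2), ‖f r‖ ^ 2 * sin r := by
    have hA : IntegrableOn (fun r => ‖f' r‖ ^ 2 * sin r + ν ^ 2 * (‖f r‖ ^ 2 / sin r))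
      (Ioo 0 (π/2)) := h1.add (h2.const_mul _)
    simp only [hD]
    rw [integral_sub hA (h3.const_mul _), integral_add h1 (h2.const_mul _), integral_const_mul, integral_const_mul]
  by_contra hcon
  have hneg : ∫ r in Ioo 0 (π/2), D r < 0 := by rw [hDint]; linarith
  set k : ℝ → ℝ := fun r => ν * cos r * ‖f r‖ ^ 2 with hk
  have hkd : ∀ r ∈ Ioo 0 (π/2), HasDerivAt k
      (ν * (-sin r) * ‖f r‖ ^ 2 + ν * cos r * (2 * inner ℝ (f r) (f' r))) r := fun r hr =>
    ((hasDerivAt_cos r).const_mul ν).mul (hf r hr).norm_sq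
  have hkD : ∀ r ∈ Ioo 0 (π/2),
      ν * (-sin r) * ‖f r‖ ^ 2 + ν * cos r * (2 * inner ℝ (f r) (f' r)) ≤ D r := by
    intro r hr
    have hs : 0 < sin r := sin_pos_of_pos_of_lt_pi hr.1 (by linarith [hr.2, pi_pos])
    have hsq : 0 ≤ ‖sin r • f' r - (ν * cos r) • f r‖ ^ 2 := sq_nonneg _
    rw [norm_sub_sq_real, norm_smul, norm_smul, mul_pow, mul_pow, Real.norm_eq_abs,
      Real.norm_eq_abs, sq_abs, sq_abs, inner_smul_left, inner_smul_right,
      real_inner_comm] at hsq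
    simp only [conj_trivial] at hsq
    have hid : D r - (ν * (-sin r) * ‖f r‖ ^ 2 + ν * cos r * (2 * inner ℝ (f r) (f' r)))
      = (sin r ^ 2 * ‖f' r‖ ^ 2 - 2 * (sin r * (ν * cos r * inner ℝ (f r) (f' r)))
        + (ν * cos r) ^ 2 * ‖f r‖ ^ 2) / sin r := by
      have : cos r ^ 2 = 1 - sin r ^ 2 := by rw [cos_sq']
      rw [mul_pow, this, hD]
      field_simp
      ring
    have := div_nonneg hsq hs.le
    linarith
  have hmain : ∀ a b, 0 < a → a ≤ b → b < π/2 → k b - k a ≤ ∫ r in a..b, D r := by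
    intro a b ha hab hb
    have hsub : Icc a b ⊆ Ioo 0 (π/2) := fun x hx => ⟨ha.trans_le hx.1, hx.2.trans_lt hb⟩
    refine intervalIntegral.sub_le_integral_of_hasDeriv_right_of_le hab
      (fun x hx => (hkd x (hsub hx)).continuousAt.continuousWithinAt)
      (fun x hx => (hkd x (hsub (Ioo_subset_Icc_self hx))).hasDerivWithinAt)
      (hDi.mono_set hsub) (fun x hx => hkD x (hsub (Ioo_subset_Icc_self hx)))
  -- limits
  have ht : Tendsto (fun a : ℝ => ∫ r in Ioc a (π/2 - a), D r ∂(volume.restrict (Ioo 0 (π/2))))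
      (nhdsWithin 0 (Ioi 0)) (nhds (∫ r in Ioo 0 (π/2), D r)) := by
    refine (aecover_Ioo_of_Ioc (A := (0:ℝ)) (B := π/2) ?_ ?_).integral_tendsto_of_countably_generated
      hDi
    · exact tendsto_id.mono_left nhdsWithin_le_nhds
    · have : Tendsto (fun a : ℝ => π/2 - a) (nhds 0) (nhds (π/2 - 0)) :=
        (continuous_const.sub continuous_id).tendsto 0
      rw [sub_zero] at this
      exact this.mono_left nhdsWithin_le_nhds
  set δ := -(∫ r in Ioo 0 (π/2), D r) / 2 with hδ
  have hδ0 : 0 < δ := by rw [hδ]; linarith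
  have hev := ht.eventually (gt_mem_nhds (show (∫ r in Ioo 0 (π/2), D r) < -δ by rw [hδ]; linarith))
  have hev2 : ∀ᶠ a : ℝ in nhdsWithin 0 (Ioi 0), a ∈ Ioo (0:ℝ) (π/4) :=
    Ioo_mem_nhdsGT (by positivity)
  obtain ⟨c, hc0, hc⟩ := (mem_nhdsGT_iff_exists_Ioo_subset).1 (hev.and hev2)
  have hc0' : (0:ℝ) < c := hc0
  have hlow : ∀ a ∈ Ioo 0 c, a⁻¹ ≤ (ν / δ) * (‖f a‖ ^ 2 / sin a) := by
    intro a ha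
    obtain ⟨hx1, hx2⟩ := hc ha
    have hb : π/2 - a < π/2 := by linarith [hx2.1]
    have hab : a ≤ π/2 - a := by linarith [hx2.2]
    have hm := hmain a (π/2 - a) hx2.1 hab hb
    have hsub : Ioc a (π/2 - a) ⊆ Ioo 0 (π/2) :=
      fun x hx => ⟨hx2.1.trans hx.1, hx.2.trans_lt hb⟩
    rw [Measure.restrict_restrict measurableSet_Ioc, inter_eq_left.2 hsub,
      ← intervalIntegral.integral_of_le hab] at hx1
    have hkb : 0 ≤ k (π/2 - a) := by
      have : 0 ≤ cos (π/2 - a) := cos_nonneg_of_mem_Icc ⟨by linarith [hx2.1, pi_pos], by linarith⟩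
      simp only [hk]; positivity
    have hka : k a ≤ ν * ‖f a‖ ^ 2 := by
      simp only [hk]
      have := cos_le_one a
      have h0 : 0 ≤ ν * ‖f a‖ ^ 2 := by positivity
      nlinarith
    have hs : 0 < sin a := sin_pos_of_pos_of_lt_pi hx2.1 (by linarith [hx2.2, pi_pos])
    have hsa : sin a ≤ a := sin_le hx2.1.le
    have : δ ≤ ν * ‖f a‖ ^ 2 := by linarith
    calc a⁻¹ ≤ (sin a)⁻¹ := by gcongr
      _ = δ / δ / sin a := by field_simp
      _ ≤ (ν * ‖f a‖ ^ 2) / δ / sin a := by gcongr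
      _ = _ := by ring
  have hcc : Ioo 0 c ⊆ Ioo 0 (π/2) := fun x hx => ⟨hx.1, by linarith [(hc hx).2.2, pi_pos]⟩
  have hint : IntegrableOn (fun x : ℝ => x⁻¹) (Ioo 0 c) := by
    refine Integrable.mono' ((h2.mono_set hcc).const_mul (ν / δ))
      (measurable_inv.aestronglyMeasurable) ?_
    filter_upwards [ae_restrict_mem measurableSet_Ioo] with x hx
    rw [Real.norm_eq_abs, abs_of_pos (inv_pos.2 hx.1)]
    exact hlow x hx
  have := (intervalIntegrable_iff_integrableOn_Ioo_of_le hc0'.le).2 hint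
  rw [intervalIntegrable_inv_iff] at this
  rcases this with h | h
  · exact hc0'.ne h
  · exact h left_mem_uIcc

lemma restr_prod (s t : Set ℝ) : (volume : Measure (ℝ × ℝ)).restrict (s ×ˢ t) =
    (volume.restrict s).prod (volume.restrict t) := by
  rw [Measure.prod_restrict, Measure.volume_eq_prod]

lemma denom_pos (ν : ℝ) (u : ℝ → ℝ → ℂ) (hu : MagAdmissible (π/2) ν u) :
    0 < ∫ p in Ioo (0:ℝ) (π/2) ×ˢ Ioo (0:ℝ) (2 * π), ‖u p.1 p.2‖ ^ 2 * Real.sin p.1 := by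
  obtain ⟨hcd, hper, hne, hE, hS⟩ := hu
  have hcont : ContinuousOn (fun p : ℝ × ℝ => u p.1 p.2) (Ioo 0 (π/2) ×ˢ univ) := hcd.continuousOn
  have hsub : Ioo (0:ℝ) (π/2) ×ˢ Ioo (0:ℝ) (2 * π) ⊆ Ioo 0 (π/2) ×ˢ univ :=
    prod_mono le_rfl (subset_univ _)
  have hms : MeasurableSet (Ioo (0:ℝ) (π/2) ×ˢ Ioo (0:ℝ) (2 * π)) :=
    measurableSet_Ioo.prod measurableSet_Ioo
  have hsin : ∀ r ∈ Ioo 0 (π/2), 0 < sin r := fun r hr =>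
    sin_pos_of_pos_of_lt_pi hr.1 (by linarith [hr.2, pi_pos])
  have hnn : 0 ≤ᵐ[volume.restrict (Ioo (0:ℝ) (π/2) ×ˢ Ioo (0:ℝ) (2 * π))]
      fun p : ℝ × ℝ => ‖u p.1 p.2‖ ^ 2 * Real.sin p.1 := by
    filter_upwards [ae_restrict_mem hms] with p hp
    exact mul_nonneg (sq_nonneg _) (hsin _ hp.1).le
  refine lt_of_le_of_ne (integral_nonneg_of_ae hnn) fun h0 => hne ?_
  have hz := (setIntegral_eq_zero_iff_of_nonneg_ae hnn hS).1 h0.symm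
  have heq := Measure.eqOn_open_of_ae_eq hz (isOpen_Ioo.prod isOpen_Ioo)
    (((hcont.mono hsub).norm.pow 2).mul (by fun_prop)) continuousOn_const
  intro r hr
  have hsl : Continuous (fun t => u r t) := by
    rw [← continuousOn_univ]
    exact hcont.comp (f := fun t => (r, t)) (by fun_prop) (fun t _ => ⟨hr, mem_univ _⟩)
  have h1 : EqOn (fun t => u r t) (fun _ => 0) (Ioo 0 (2 * π)) := by
    intro t ht
    have h2 := heq (show (r, t) ∈ _ from ⟨hr, ht⟩)
    simpa [(hsin r hr).ne'] using h2
  have h3 := h1.closure hsl continuous_const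
  rw [closure_Ioo (by positivity)] at h3
  intro θ
  obtain ⟨y, hy, hy'⟩ := Function.Periodic.exists_mem_Ico₀ (f := fun t => u r t)
    (fun t => hper r t) (by positivity : 0 < 2 * π) θ
  exact hy'.trans (h3 (Ico_subset_Icc_self hy))

lemma lower_bound (ν : ℝ) (hν : ν ∈ Ioc (0:ℝ) (1/2)) (u : ℝ → ℝ → ℂ)
    (hu : MagAdmissible (π/2) ν u) : ν * (ν + 1) ≤ magQuot (π/2) ν u := by
  have hpos := denom_pos ν u hu
  obtain ⟨hcd, hper, hne, hE, hS⟩ := hu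
  rw [magQuot, le_div_iff₀ hpos]
  have hΩ : IsOpen (Ioo (0:ℝ) (π/2) ×ˢ (univ : Set ℝ)) := isOpen_Ioo.prod isOpen_univ
  have hsub : Ioo (0:ℝ) (π/2) ×ˢ Ioo (0:ℝ) (2 * π) ⊆ Ioo 0 (π/2) ×ˢ univ :=
    prod_mono le_rfl (subset_univ _)
  have hms : MeasurableSet (Ioo (0:ℝ) (π/2) ×ˢ Ioo (0:ℝ) (2 * π)) :=
    measurableSet_Ioo.prod measurableSet_Ioo
  have hsin : ∀ r ∈ Ioo 0 (π/2), 0 < sin r := fun r hr =>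
    sin_pos_of_pos_of_lt_pi hr.1 (by linarith [hr.2, pi_pos])
  have hcont : ContinuousOn (fun p : ℝ × ℝ => u p.1 p.2) (Ioo 0 (π/2) ×ˢ univ) := hcd.continuousOn
  have hfd := hcd.continuousOn_fderiv_of_isOpen hΩ (by exact_mod_cast le_top)
  set Ur : ℝ × ℝ → ℂ := fun p => fderiv ℝ (Function.uncurry u) p (1, 0) with hUr
  set Ut : ℝ × ℝ → ℂ := fun p => fderiv ℝ (Function.uncurry u) p (0, 1) with hUt
  have hUrc : ContinuousOn Ur (Ioo 0 (π/2) ×ˢ univ) := hfd.clm_apply continuousOn_const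
  have hUtc : ContinuousOn Ut (Ioo 0 (π/2) ×ˢ univ) := hfd.clm_apply continuousOn_const
  have hdiff : ∀ r ∈ Ioo 0 (π/2), ∀ t, HasFDerivAt (Function.uncurry u)
      (fderiv ℝ (Function.uncurry u) (r, t)) (r, t) := fun r hr t =>
    ((hcd.contDiffAt (hΩ.mem_nhds ⟨hr, mem_univ _⟩)).differentiableAt (by simp)).hasFDerivAt
  have hdr : ∀ r ∈ Ioo 0 (π/2), ∀ t, HasDerivAt (fun s => u s t) (Ur (r, t)) r := by
    intro r hr t
    exact (hdiff r hr t).comp_hasDerivAt r (f := fun s => (s, t))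
      ((hasDerivAt_id r).prodMk (hasDerivAt_const r t))
  have hdt : ∀ r ∈ Ioo 0 (π/2), ∀ t, HasDerivAt (fun s => u r s) (Ut (r, t)) t := by
    intro r hr t
    exact (hdiff r hr t).comp_hasDerivAt t (f := fun s => (r, s))
      ((hasDerivAt_const t r).prodMk (hasDerivAt_id t))
  set A : ℝ × ℝ → ℝ := fun p => ‖Ur p‖ ^ 2 * sin p.1 with hA
  set B : ℝ × ℝ → ℝ := fun p => ‖Ut p - Complex.I * (ν : ℂ) * u p.1 p.2‖ ^ 2 / sin p.1 with hB
  set N : ℝ × ℝ → ℝ := fun p => ‖u p.1 p.2‖ ^ 2 / sin p.1 with hN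
  set S : ℝ × ℝ → ℝ := fun p => ‖u p.1 p.2‖ ^ 2 * sin p.1 with hSdef
  have hsc : ContinuousOn (fun p : ℝ × ℝ => sin p.1) (Ioo 0 (π/2) ×ˢ univ) := by fun_prop
  have hAc : ContinuousOn A (Ioo 0 (π/2) ×ˢ univ) := (hUrc.norm.pow 2).mul hsc
  have hBc : ContinuousOn B (Ioo 0 (π/2) ×ˢ univ) :=
    ((hUtc.sub (continuousOn_const.mul hcont)).norm.pow 2).div hsc
      (fun p hp => (hsin _ hp.1).ne')
  have hNc : ContinuousOn N (Ioo 0 (π/2) ×ˢ univ) :=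
    (hcont.norm.pow 2).div hsc (fun p hp => (hsin _ hp.1).ne')
  have hEeq : ∀ p ∈ Ioo (0:ℝ) (π/2) ×ˢ Ioo (0:ℝ) (2 * π),
      magEnergyIntegrand ν u p = A p + B p := by
    rintro ⟨r, t⟩ ⟨hr, ht⟩
    have := (hsin r hr).ne'
    simp only [magEnergyIntegrand, hA, hB, (hdr r hr t).deriv, (hdt r hr t).deriv]
    field_simp
  have hAB : IntegrableOn (fun p => A p + B p) (Ioo (0:ℝ) (π/2) ×ˢ Ioo (0:ℝ) (2 * π)) :=
    hE.congr_fun hEeq hms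
  have hAnn : ∀ p ∈ Ioo (0:ℝ) (π/2) ×ˢ Ioo (0:ℝ) (2 * π), 0 ≤ A p := fun p hp =>
    mul_nonneg (sq_nonneg _) (hsin _ hp.1).le
  have hBnn : ∀ p ∈ Ioo (0:ℝ) (π/2) ×ˢ Ioo (0:ℝ) (2 * π), 0 ≤ B p := fun p hp =>
    div_nonneg (sq_nonneg _) (hsin _ hp.1).le
  have hAi : IntegrableOn A (Ioo (0:ℝ) (π/2) ×ˢ Ioo (0:ℝ) (2 * π)) := by
    refine Integrable.mono' hAB ((hAc.mono hsub).aestronglyMeasurable hms) ?_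
    filter_upwards [ae_restrict_mem hms] with p hp
    rw [Real.norm_eq_abs, abs_of_nonneg (hAnn p hp)]
    linarith [hBnn p hp]
  have hBi : IntegrableOn B (Ioo (0:ℝ) (π/2) ×ˢ Ioo (0:ℝ) (2 * π)) := by
    refine Integrable.mono' hAB ((hBc.mono hsub).aestronglyMeasurable hms) ?_
    filter_upwards [ae_restrict_mem hms] with p hp
    rw [Real.norm_eq_abs, abs_of_nonneg (hBnn p hp)]
    linarith [hAnn p hp]
  rw [setIntegral_congr_fun hms hEeq, integral_add hAi hBi]
  have hNm : AEStronglyMeasurable N (volume.restrict (Ioo (0:ℝ) (π/2) ×ˢ Ioo (0:ℝ) (2 * π))) :=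
    (hNc.mono hsub).aestronglyMeasurable hms
  rw [IntegrableOn, restr_prod] at hAi hBi hS
  rw [restr_prod] at hNm ⊢
  -- slices in the angular variable
  have hslice : ∀ r ∈ Ioo 0 (π/2), ν ^ 2 * ∫ t in Ioo 0 (2 * π), N (r, t) ≤
      ∫ t in Ioo 0 (2 * π), B (r, t) := by
    intro r hr
    have hUs : Continuous (fun t => Ut (r, t)) := by
      rw [← continuousOn_univ]
      exact hUtc.comp (f := fun t => (r, t)) (by fun_prop) (fun t _ => ⟨hr, mem_univ _⟩)
    have := ang_ineq ν hν (fun t => u r t) (fun t => Ut (r, t)) (hdt r hr) hUs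
      (by simpa using hper r 0)
    rw [intervalIntegral.integral_of_le (by positivity),
      intervalIntegral.integral_of_le (by positivity), integral_Ioc_eq_integral_Ioo,
      integral_Ioc_eq_integral_Ioo] at this
    simp only [hN, hB, integral_div]
    rw [← mul_div_assoc]
    exact div_le_div_of_nonneg_right this (hsin r hr).le
  have hNi : Integrable N ((volume.restrict (Ioo (0:ℝ) (π/2))).prod
      (volume.restrict (Ioo (0:ℝ) (2 * π)))) := by
    rw [integrable_prod_iff hNm]
    refine ⟨?_, ?_⟩
    · filter_upwards [ae_restrict_mem measurableSet_Ioo] with r hr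
      have hus : Continuous (fun t => u r t) :=
        continuous_iff_continuousAt.2 fun t => (hdt r hr t).continuousAt
      have : Continuous (fun t => N (r, t)) := by
        simp only [hN]; exact (hus.norm.pow 2).div_const _
      exact (this.integrableOn_Icc (a := 0) (b := 2 * π)).mono_set Ioo_subset_Icc_self
    · refine Integrable.mono' (hBi.integral_prod_left.const_mul (ν ^ 2)⁻¹)
        hNm.norm.integral_prod_right' ?_
      filter_upwards [ae_restrict_mem measurableSet_Ioo] with r hr
      have hnn : ∀ t, ‖N (r, t)‖ = N (r, t) := fun t => by
        rw [Real.norm_eq_abs, abs_of_nonneg (div_nonneg (sq_nonneg _) (hsin r hr).le)]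
      simp only [hnn]
      rw [Real.norm_eq_abs, abs_of_nonneg
        (integral_nonneg fun t => div_nonneg (sq_nonneg _) (hsin r hr).le)]
      have h2 : 0 < ν ^ 2 := pow_pos hν.1 2
      rw [inv_mul_eq_div, le_div_iff₀ h2, mul_comm]
      exact hslice r hr
  have step2 : ν ^ 2 * ∫ p, N p ∂((volume.restrict (Ioo (0:ℝ) (π/2))).prod
      (volume.restrict (Ioo (0:ℝ) (2 * π)))) ≤ ∫ p, B p ∂((volume.restrict (Ioo (0:ℝ) (π/2))).prod
      (volume.restrict (Ioo (0:ℝ) (2 * π)))) := by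
    rw [integral_prod _ hNi, integral_prod _ hBi, ← integral_const_mul]
    refine integral_mono_ae (hNi.integral_prod_left.const_mul _) hBi.integral_prod_left ?_
    filter_upwards [ae_restrict_mem measurableSet_Ioo] with r hr
    exact hslice r hr
  have step1 : ν * (ν + 1) * ∫ p, S p ∂((volume.restrict (Ioo (0:ℝ) (π/2))).prod
      (volume.restrict (Ioo (0:ℝ) (2 * π)))) ≤ (∫ p, A p ∂((volume.restrict (Ioo (0:ℝ) (π/2))).prod
      (volume.restrict (Ioo (0:ℝ) (2 * π))))) + ν ^ 2 *
      ∫ p, N p ∂((volume.restrict (Ioo (0:ℝ) (π/2))).prod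
      (volume.restrict (Ioo (0:ℝ) (2 * π)))) := by
    rw [integral_prod_symm _ hNi, integral_prod_symm _ hAi, integral_prod_symm _ hS,
      ← integral_const_mul, ← integral_const_mul,
      ← integral_add hAi.integral_prod_right (hNi.integral_prod_right.const_mul _)]
    refine integral_mono_ae (hS.integral_prod_right.const_mul _)
      (hAi.integral_prod_right.add (hNi.integral_prod_right.const_mul _)) ?_
    filter_upwards [hAi.prod_left_ae, hNi.prod_left_ae, hS.prod_left_ae] with t h1 h2 h3
    exact rad_ineq ν hν.1 (fun r => u r t) (fun r => Ur (r, t)) (fun r hr => hdr r hr t) h1 h2 h3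
  linarith

lemma sin_rpow_deriv (ν r : ℝ) (hr : r ∈ Ioo 0 (π/2)) :
    HasDerivAt (fun s => sin s ^ ν) (ν * sin r ^ (ν - 1) * cos r) r := by
  have hs : 0 < sin r := sin_pos_of_pos_of_lt_pi hr.1 (by linarith [hr.2, pi_pos])
  have := (hasDerivAt_sin r).rpow_const (p := ν) (Or.inl hs.ne')
  convert this using 1
  ring

lemma int_sin_rpow (a : ℝ) (ha : -1 < a) (ha0 : a ≤ 0) :
    IntegrableOn (fun r => sin r ^ a) (Ioo 0 (π/2)) := by
  have h1 : IntegrableOn (fun r : ℝ => r ^ a) (Ioo 0 (π/2)) :=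
    (intervalIntegrable_iff_integrableOn_Ioo_of_le (by positivity)).1
      (intervalIntegral.intervalIntegrable_rpow' ha)
  refine Integrable.mono' (h1.const_mul ((2 / π) ^ a))
    (measurable_sin.pow_const a).aestronglyMeasurable ?_
  filter_upwards [ae_restrict_mem measurableSet_Ioo] with r hr
  have hs : 0 < sin r := sin_pos_of_pos_of_lt_pi hr.1 (by linarith [hr.2, pi_pos])
  rw [Real.norm_eq_abs, abs_of_nonneg (rpow_nonneg hs.le _), ← mul_rpow (by positivity) hr.1.le]
  have hr0 := hr.1
  exact rpow_le_rpow_of_nonpos (by positivity) (mul_le_sin hr.1.le hr.2.le) ha0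

lemma extremal (ν : ℝ) (hν : ν ∈ Ioc (0:ℝ) (1/2)) :
    MagAdmissible (π/2) ν (fun r _ => ((Real.sin r ^ ν : ℝ) : ℂ)) ∧
    magQuot (π/2) ν (fun r _ => ((Real.sin r ^ ν : ℝ) : ℂ)) = ν * (ν + 1) := by
  obtain ⟨hν0, hν1⟩ := hν
  have hms : MeasurableSet (Ioo (0:ℝ) (π/2) ×ˢ Ioo (0:ℝ) (2 * π)) :=
    measurableSet_Ioo.prod measurableSet_Ioo
  have hsin : ∀ r ∈ Ioo 0 (π/2), 0 < sin r := fun r hr =>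
    sin_pos_of_pos_of_lt_pi hr.1 (by linarith [hr.2, pi_pos])
  set e : ℝ → ℝ := fun r => ν ^ 2 * (cos r ^ 2 + 1) * sin r ^ (2 * ν - 1) with he
  set w : ℝ → ℝ := fun r => sin r ^ (2 * ν - 1) * sin r ^ 2 with hw
  have hbase := int_sin_rpow (2 * ν - 1) (by linarith) (by linarith)
  have hei : IntegrableOn e (Ioo 0 (π/2)) := by
    refine Integrable.bdd_mul (c := ν ^ 2 * 2) hbase (by fun_prop) (ae_of_all _ fun r => ?_)
    rw [Real.norm_eq_abs, abs_of_nonneg (by positivity)]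
    have := cos_sq_le_one r
    gcongr; linarith
  have hwi : IntegrableOn w (Ioo 0 (π/2)) := by
    refine Integrable.mul_bdd (c := 1) hbase (by fun_prop) (ae_of_all _ fun r => ?_)
    rw [Real.norm_eq_abs, abs_of_nonneg (by positivity)]
    exact sin_sq_le_one r
  have hEeq : ∀ p ∈ Ioo (0:ℝ) (π/2) ×ˢ Ioo (0:ℝ) (2 * π),
      magEnergyIntegrand ν (fun r _ => ((Real.sin r ^ ν : ℝ) : ℂ)) p = e p.1 := by
    rintro ⟨r, t⟩ ⟨hr, ht⟩
    have hs := hsin r hr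
    simp only [magEnergyIntegrand, he, (sin_rpow_deriv ν r hr).ofReal_comp.deriv, deriv_const,
      zero_sub, norm_neg, norm_mul, Complex.norm_I, Complex.norm_real, Real.norm_eq_abs, one_mul,
      mul_pow, sq_abs]
    have h1 : sin r ^ (ν - 1) = sin r ^ ν / sin r := by rw [rpow_sub hs, rpow_one]
    have h2 : sin r ^ (2 * ν - 1) = (sin r ^ ν) ^ 2 / sin r := by
      rw [rpow_sub hs, rpow_one, mul_comm, rpow_mul hs.le, rpow_two]
    rw [h1, h2]
    field_simp
  have hSeq : ∀ p ∈ Ioo (0:ℝ) (π/2) ×ˢ Ioo (0:ℝ) (2 * π),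
      ‖((Real.sin p.1 ^ ν : ℝ) : ℂ)‖ ^ 2 * Real.sin p.1 = w p.1 := by
    rintro ⟨r, t⟩ ⟨hr, ht⟩
    have hs := hsin r hr
    simp only [hw, Complex.norm_real, Real.norm_eq_abs, sq_abs]
    have h2 : sin r ^ (2 * ν - 1) = (sin r ^ ν) ^ 2 / sin r := by
      rw [rpow_sub hs, rpow_one, mul_comm, rpow_mul hs.le, rpow_two]
    rw [h2]
    field_simp
  have hadm : MagAdmissible (π/2) ν (fun r _ => ((Real.sin r ^ ν : ℝ) : ℂ)) := by
    refine ⟨?_, fun _ _ => rfl, ?_, ?_, ?_⟩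
    · refine Complex.ofRealCLM.contDiff.comp_contDiffOn (f := fun p : ℝ × ℝ => sin p.1 ^ ν) ?_
      exact ContDiffOn.rpow_const_of_ne (contDiff_sin.comp contDiff_fst).contDiffOn
        (fun p hp => (hsin _ hp.1).ne')
    · intro h
      have h4 : π / 4 ∈ Ioo 0 (π/2) := ⟨by positivity, by linarith [pi_pos]⟩
      have := h (π / 4) h4 0
      have h5 := rpow_pos_of_pos (hsin _ h4) ν
      exact h5.ne' (Complex.ofReal_eq_zero.1 this)
    · refine IntegrableOn.congr_fun ?_ (fun p hp => (hEeq p hp).symm) hms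
      rw [IntegrableOn, restr_prod]
      exact Integrable.comp_fst hei _
    · refine IntegrableOn.congr_fun ?_ (fun p hp => (hSeq p hp).symm) hms
      rw [IntegrableOn, restr_prod]
      exact Integrable.comp_fst hwi _
  refine ⟨hadm, ?_⟩
  have hpos := denom_pos ν _ hadm
  rw [magQuot, div_eq_iff hpos.ne', setIntegral_congr_fun hms hEeq, setIntegral_congr_fun hms hSeq,
    restr_prod, integral_fun_fst, integral_fun_fst, smul_eq_mul, smul_eq_mul, mul_left_comm]
  congr 1
  have hkey : ∫ r in (0:ℝ)..(π/2), (e r - ν * (ν + 1) * w r) =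
      ν * cos (π/2) * sin (π/2) ^ (2 * ν) - ν * cos 0 * sin 0 ^ (2 * ν) := by
    refine intervalIntegral.integral_eq_sub_of_hasDerivAt_of_le
      (f := fun r => ν * cos r * sin r ^ (2 * ν)) (by positivity) ?_ ?_ ?_
    · refine Continuous.continuousOn ?_
      exact (continuous_const.mul continuous_cos).mul
        (continuous_sin.rpow_const fun x => Or.inr (by linarith))
    · intro r hr
      have hs := hsin r hr
      refine (((hasDerivAt_cos r).const_mul ν).mul (sin_rpow_deriv (2 * ν) r hr)).congr_deriv ?_
      have h2 : sin r ^ (2 * ν) = sin r ^ (2 * ν - 1) * sin r := by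
        rw [rpow_sub hs, rpow_one]; field_simp
      have h3 : sin r ^ 2 = 1 - cos r ^ 2 := sin_sq r
      simp only [he, hw]
      rw [h2]
      linear_combination (-sin r ^ (2 * ν - 1) * ν ^ 2 * (-1)) * h3
    · rw [intervalIntegrable_iff_integrableOn_Ioo_of_le (by positivity)]
      exact hei.sub (hwi.const_mul _)
  rw [cos_pi_div_two, sin_zero, zero_rpow (by linarith), mul_zero, mul_zero, zero_mul, sub_zero,
    intervalIntegral.integral_of_le (by positivity), integral_Ioc_eq_integral_Ioo,
    integral_sub hei (hwi.const_mul _), integral_const_mul] at hkey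
  linarith

/-- The first magnetic Neumann eigenvalue of the hemisphere `S²₊` (radius `r < π/2`)
with Aharonov–Bohm potential of flux `ν ∈ (0, 1/2]` and pole at its center equals
`ν(ν+1)`, attained by `u(r, θ) = (sin r)^ν`. -/
theorem hemisphere_first_AB_eigenvalue (ν : ℝ) (hν : ν ∈ Ioc (0:ℝ) (1/2)) :
    sInf { q | ∃ u : ℝ → ℝ → ℂ, MagAdmissible (π/2) ν u ∧ q = magQuot (π/2) ν u }
        = ν * (ν + 1) ∧
    MagAdmissible (π/2) ν (fun r _ => ((Real.sin r ^ ν : ℝ) : ℂ)) ∧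
    magQuot (π/2) ν (fun r _ => ((Real.sin r ^ ν : ℝ) : ℂ)) = ν * (ν + 1) := by
  obtain ⟨h1, h2⟩ := extremal ν hν
  refine ⟨IsLeast.csInf_eq ⟨⟨_, h1, h2.symm⟩, ?_⟩, h1, h2⟩
  rintro q ⟨u, hu, rfl⟩
  exact lower_bound ν hν u hu
end

section
/- Let ν ∈ (0,1/2]. For R ∈ (0,π) define Λ(R) as the infimum, over all smooth not identically zero functions u : (0,R) × ℝ → ℂ that are 2π-periodic in the second variable θ, vanish for all r in a neighborhood of R, and have finite magnetic energy, of the quotient Q[u] = (∫₀^{2π} ∫₀^R (|∂_r u(r,θ)|² + |∂_θ u(r,θ) − iν u(r,θ)|²/sin²(r)) sin(r) dr dθ) / (∫₀^{2π} ∫₀^R |u(r,θ)|² sin(r) dr dθ). Then Λ(R) ≥ ν(ν+1) for every R ∈ (0,π), and Λ(R) → ν(ν+1) as R → π⁻. -/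
open MeasureTheory Real Set Filter

/-- Admissible functions for the Dirichlet problem on the geodesic disk of radius `R`:
magnetically admissible and vanishing for all `r` in a neighborhood of `R`. -/
def DirAdmissible (R ν : ℝ) (u : ℝ → ℝ → ℂ) : Prop :=
  MagAdmissible R ν u ∧ ∃ ε > (0:ℝ), ∀ r : ℝ, R - ε < r → ∀ θ : ℝ, u r θ = 0

/-- `Λ(R)`: the first magnetic Dirichlet eigenvalue of the geodesic disk of
radius `R` centered at the pole, expressed variationally. -/
noncomputable def Lam (ν R : ℝ) : ℝ :=
  sInf { q | ∃ u : ℝ → ℝ → ℂ, DirAdmissible R ν u ∧ q = magQuot R ν u }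

theorem ab_wirtinger (ν : ℝ) (hν : ν ∈ Ioc (0:ℝ) (1/2)) (f f' : ℝ → ℂ)
    (hf : ∀ x, HasDerivAt f (f' x) x) (hf' : Continuous f') (hper : f (2 * π) = f 0) :
    ν ^ 2 * ∫ t in Ioo (0:ℝ) (2 * π), ‖f t‖ ^ 2 ≤
      ∫ t in Ioo (0:ℝ) (2 * π), ‖f' t - Complex.I * (ν : ℂ) * f t‖ ^ 2 := by
  have hfc : Continuous f := continuous_iff_continuousAt.2 fun x => (hf x).continuousAt
  have hab : (0:ℝ) < 2 * π := by positivity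
  have hL : ∀ g : ℝ → ℂ, Continuous g → MemLp g 2 (volume.restrict (Ioc 0 (2 * π))) := by
    intro g hg
    obtain ⟨C, hC⟩ := isCompact_Icc.exists_bound_of_continuousOn (s := Icc 0 (2 * π)) hg.continuousOn
    refine MemLp.of_bound hg.aestronglyMeasurable C ?_
    filter_upwards [ae_restrict_mem measurableSet_Ioc] with x hx using hC x (Ioc_subset_Icc_self hx)
  have hgc : Continuous (fun t => f' t - Complex.I * (ν : ℂ) * f t) := by fun_prop
  have P1 := hasSum_sq_fourierCoeffOn hab (hL f hfc)
  have P2 := hasSum_sq_fourierCoeffOn hab (hL _ hgc)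
  have key : ∀ n : ℤ, fourierCoeffOn hab (fun t => f' t - Complex.I * (ν : ℂ) * f t) n
      = Complex.I * ((n : ℂ) - ν) * fourierCoeffOn hab f n := by
    intro n
    have hsub : fourierCoeffOn hab (fun t => f' t - Complex.I * (ν : ℂ) * f t) n
        = fourierCoeffOn hab f' n - Complex.I * (ν : ℂ) * fourierCoeffOn hab f n := by
      rw [← fourierCoeffOn.const_mul]
      simp only [fourierCoeffOn_eq_integral]
      rw [← smul_sub, ← intervalIntegral.integral_sub]
      · simp only [smul_sub]
      · apply Continuous.intervalIntegrable
        fun_prop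
      · apply Continuous.intervalIntegrable
        fun_prop
    have hder : fourierCoeffOn hab f' n = Complex.I * n * fourierCoeffOn hab f n := by
      by_cases hn : n = 0
      · subst hn
        rw [fourierCoeffOn_eq_integral]
        have : ∫ x in (0:ℝ)..(2*π), f' x = f (2*π) - f 0 :=
          intervalIntegral.integral_eq_sub_of_hasDerivAt (fun x _ => hf x)
            (hf'.intervalIntegrable _ _)
        simp [this, hper]
      · have h := fourierCoeffOn_of_hasDerivAt hab hn (fun x _ => hf x) (hf'.intervalIntegrable _ _)
        rw [h, hper]
        have h1 : (n:ℂ) ≠ 0 := by exact_mod_cast hn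
        have h2 : (π:ℂ) ≠ 0 := by exact_mod_cast Real.pi_ne_zero
        push_cast
        field_simp
        simp
        ring
    rw [hsub, hder]; ring
  have hle : ∀ n : ℤ, ν ^ 2 * ‖fourierCoeffOn hab f n‖ ^ 2 ≤
      ‖fourierCoeffOn hab (fun t => f' t - Complex.I * (ν : ℂ) * f t) n‖ ^ 2 := by
    intro n
    rw [key, norm_mul, norm_mul, Complex.norm_I, one_mul, mul_pow]
    have : ‖(n:ℂ) - ν‖ ^ 2 = ((n:ℝ) - ν) ^ 2 := by
      have : (n:ℂ) - ν = (((n:ℝ) - ν : ℝ) : ℂ) := by push_cast; rfl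
      rw [this, Complex.norm_real, Real.norm_eq_abs, sq_abs]
    rw [this]
    refine mul_le_mul_of_nonneg_right ?_ (by positivity)
    obtain ⟨h0, h1⟩ := hν
    rcases le_or_gt n 0 with hn | hn
    · have : (n:ℝ) ≤ 0 := by exact_mod_cast hn
      nlinarith
    · have : (1:ℝ) ≤ n := by exact_mod_cast hn
      nlinarith
  have := hasSum_le hle (P1.mul_left _) P2
  rw [intervalIntegral.integral_of_le hab.le, intervalIntegral.integral_of_le hab.le,
    integral_Ioc_eq_integral_Ioo, integral_Ioc_eq_integral_Ioo, sub_zero, smul_eq_mul, smul_eq_mul,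
    mul_left_comm] at this
  exact le_of_mul_le_mul_left this (by positivity)

theorem frequently_small (R : ℝ) (hR : R ∈ Ioo (0:ℝ) π) (v : ℝ → ℂ)
    (hW : IntegrableOn (fun r => ‖v r‖ ^ 2 / Real.sin r) (Ioo 0 R)) (η : ℝ) (hη : 0 < η) :
    ∃ᶠ r in nhdsWithin 0 (Ioi 0), ‖v r‖ ^ 2 < η := by
  intro h
  have h' : ∀ᶠ r in nhdsWithin (0:ℝ) (Ioi 0), η ≤ ‖v r‖ ^ 2 := by
    filter_upwards [h] with r hr using not_lt.1 hr
  obtain ⟨d, hd, hd'⟩ := mem_nhdsGT_iff_exists_Ioo_subset.1 h'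
  have hd0 : (0:ℝ) < d := hd
  set m := min d R with hm
  have hm0 : 0 < m := lt_min hd0 hR.1
  have : IntegrableOn (fun r : ℝ => r⁻¹) (Ioo 0 m) := by
    refine Integrable.mono' ((hW.mono_set (t := Ioo 0 R) (Ioo_subset_Ioo_right (min_le_right d R))).const_mul η⁻¹)
      (by fun_prop) ?_
    filter_upwards [ae_restrict_mem measurableSet_Ioo] with r hr
    have h1 : η ≤ ‖v r‖ ^ 2 := hd' ⟨hr.1, hr.2.trans_le (min_le_left _ _)⟩
    have hr0 : 0 < r := hr.1
    have h2 : 0 < Real.sin r := Real.sin_pos_of_pos_of_lt_pi hr.1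
      ((hr.2.trans_le (min_le_right _ _)).trans hR.2)
    have h3 : Real.sin r ≤ r := Real.sin_le hr.1.le
    rw [Real.norm_eq_abs, abs_of_pos (inv_pos.2 hr0)]
    calc r⁻¹ ≤ (Real.sin r)⁻¹ := inv_anti₀ h2 h3
      _ = η⁻¹ * (η / Real.sin r) := by field_simp
      _ ≤ _ := by gcongr
  have h2 : IntervalIntegrable (fun r : ℝ => r⁻¹) volume 0 m :=
    (intervalIntegrable_iff_integrableOn_Ioo_of_le hm0.le).2 this
  rw [intervalIntegrable_inv_iff] at h2
  rcases h2 with h2 | h2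
  · exact hm0.ne h2
  · exact h2 (by simp)

theorem radial_ineq (ν : ℝ) (hν : ν ∈ Ioc (0:ℝ) (1/2)) (R : ℝ) (hR : R ∈ Ioo (0:ℝ) π) (v : ℝ → ℂ)
    (hv : ∀ r ∈ Ioc 0 R, DifferentiableAt ℝ v r) (hvR : v R = 0)
    (hE : IntegrableOn (fun r => ‖deriv v r‖ ^ 2 * Real.sin r) (Ioo 0 R))
    (hW : IntegrableOn (fun r => ‖v r‖ ^ 2 / Real.sin r) (Ioo 0 R))
    (hN : IntegrableOn (fun r => ‖v r‖ ^ 2 * Real.sin r) (Ioo 0 R)) :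
    ν * (ν + 1) * ∫ r in Ioo 0 R, ‖v r‖ ^ 2 * Real.sin r ≤
      (∫ r in Ioo 0 R, ‖deriv v r‖ ^ 2 * Real.sin r) +
        ν ^ 2 * ∫ r in Ioo 0 R, ‖v r‖ ^ 2 / Real.sin r := by
  set H : ℝ → ℝ := fun r => ‖deriv v r‖ ^ 2 * Real.sin r + ν ^ 2 * (‖v r‖ ^ 2 / Real.sin r)
    - ν * (ν + 1) * (‖v r‖ ^ 2 * Real.sin r) with hH
  have hHi : IntegrableOn H (Ioo 0 R) := (hE.add (hW.const_mul _)).sub (hN.const_mul _)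
  have hHI : ∫ r in Ioo 0 R, H r = (∫ r in Ioo 0 R, ‖deriv v r‖ ^ 2 * Real.sin r) +
        ν ^ 2 * (∫ r in Ioo 0 R, ‖v r‖ ^ 2 / Real.sin r)
        - ν * (ν + 1) * ∫ r in Ioo 0 R, ‖v r‖ ^ 2 * Real.sin r := by
    have e1 := integral_sub (hE.add (hW.const_mul (ν^2))) (hN.const_mul (ν * (ν + 1)))
    have e2 := integral_add hE (hW.const_mul (ν^2))
    simp only [Pi.add_apply] at e1
    simp only [integral_const_mul] at e1 e2
    rw [hH, e1, e2]
  suffices 0 ≤ ∫ r in Ioo 0 R, H r by linarith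
  have hHicc : IntegrableOn H (Icc 0 R) := by rwa [integrableOn_Icc_iff_integrableOn_Ioo]
  have hlim : Tendsto (fun d => ∫ r in d..R, H r) (nhdsWithin 0 (Ioi 0)) (nhds (∫ r in Ioo 0 R, H r)) := by
    have hc : ContinuousOn (fun x => ∫ t in R..x, H t) (uIcc 0 R) := by
      apply intervalIntegral.continuousOn_primitive_interval'
      · exact (intervalIntegrable_iff_integrableOn_Icc_of_le hR.1.le).2 hHicc
      · simp
    have := ((hc 0 (by simp)).mono_left (nhdsWithin_mono _ (s := Ioc 0 R) (by
      rw [uIcc_of_le hR.1.le]; exact Ioc_subset_Icc_self))).neg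
    rw [nhdsWithin_Ioc_eq_nhdsGT hR.1] at this
    simp only [← intervalIntegral.integral_symm] at this
    rwa [intervalIntegral.integral_of_le hR.1.le, integral_Ioc_eq_integral_Ioo] at this
  have hlow : ∀ d ∈ Ioo 0 R, -(ν * ‖v d‖ ^ 2) ≤ ∫ r in d..R, H r := by
    intro d hd
    have hd0 : 0 < d := hd.1
    have hder : ∀ x ∈ Ioc 0 R, HasDerivAt (fun r => ν * (Real.cos r * ‖v r‖ ^ 2))
        (ν * (-Real.sin x * ‖v x‖ ^ 2 + Real.cos x * (2 * inner ℝ (v x) (deriv v x)))) x := by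
      intro x hx
      exact ((Real.hasDerivAt_cos x).mul (hv x hx).hasDerivAt.norm_sq).const_mul ν
    have := intervalIntegral.sub_le_integral_of_hasDeriv_right_of_le (a := d) (b := R) hd.2.le
      (g := fun r => ν * (Real.cos r * ‖v r‖ ^ 2)) (φ := H)
      (g' := fun x => ν * (-Real.sin x * ‖v x‖ ^ 2 + Real.cos x * (2 * inner ℝ (v x) (deriv v x))))
      (fun x hx => (hder x ⟨hd0.trans_le hx.1, hx.2⟩).continuousAt.continuousWithinAt)
      (fun x hx => (hder x ⟨hd0.trans hx.1, hx.2.le⟩).hasDerivWithinAt)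
      (hHicc.mono_set (Icc_subset_Icc_left hd0.le)) ?_
    · simp only [hvR] at this
      refine le_trans ?_ this
      have : Real.cos d ≤ 1 := Real.cos_le_one d
      have : ν * (Real.cos d * ‖v d‖^2) ≤ ν * (1 * ‖v d‖ ^2) := by
        have := hν.1.le
        gcongr
      simp
      linarith
    · intro x hx
      have hs : 0 < Real.sin x := Real.sin_pos_of_pos_of_lt_pi (hd0.trans hx.1) (hx.2.trans hR.2)
      have hcs := Real.sin_sq_add_cos_sq x
      set s := Real.sin x with hsd
      set c := Real.cos x
      have hq := norm_sub_sq_real ((ν * c) • v x) (s • deriv v x)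
      rw [real_inner_smul_left, real_inner_smul_right, norm_smul, norm_smul, mul_pow, mul_pow,
        Real.norm_eq_abs, Real.norm_eq_abs, sq_abs, sq_abs] at hq
      have hq0 := sq_nonneg ‖(ν * c) • v x - s • deriv v x‖
      rw [hq] at hq0
      set ip : ℝ := inner ℝ (v x) (deriv v x)
      set a := ‖v x‖ ^ 2
      set b := ‖deriv v x‖ ^ 2
      have e : H x - ν * (-s * a + c * (2 * ip)) =
          ((ν * c) ^ 2 * a - 2 * (ν * c * (s * ip)) + s ^ 2 * b) / s := by
        simp only [hH]
        have hc2 : c ^ 2 = 1 - s ^ 2 := by linarith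
        rw [mul_pow, hc2]
        rw [← hsd]
        field_simp
        ring
      have : 0 ≤ H x - ν * (-s * a + c * (2 * ip)) := by
        rw [e]; positivity
      linarith
  by_contra hneg
  push Not at hneg
  set L := ∫ r in Ioo 0 R, H r with hL
  have hη : 0 < -L / ν / 2 := by have := hν.1; have : 0 < -L := by linarith
                                 positivity
  have hfr : ∃ᶠ d in nhdsWithin (0:ℝ) (Ioi 0), L / 2 ≤ ∫ r in d..R, H r := by
    refine ((frequently_small R hR v hW _ hη).and_eventually (Ioo_mem_nhdsGT hR.1)).mono ?_
    rintro d ⟨h1, h2⟩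
    refine le_trans ?_ (hlow d h2)
    have : ν * ‖v d‖ ^ 2 ≤ ν * (-L / ν / 2) := mul_le_mul_of_nonneg_left h1.le hν.1.le
    have e : ν * (-L / ν / 2) = - L / 2 := by have := hν.1; field_simp
    linarith
  have := ge_of_tendsto_of_frequently hlim hfr
  linarith

theorem mag_lower (ν : ℝ) (hν : ν ∈ Ioc (0:ℝ) (1/2)) (R : ℝ) (hR : R ∈ Ioo (0:ℝ) π)
    (u : ℝ → ℝ → ℂ) (hu : DirAdmissible R ν u) : ν * (ν + 1) ≤ magQuot R ν u := by
  obtain ⟨⟨hsm, hper, hnz, hE, hN⟩, ε, hε, hvan⟩ := hu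
  have hopen : IsOpen (Ioo (0:ℝ) R ×ˢ (univ : Set ℝ)) := isOpen_Ioo.prod isOpen_univ
  set U : ℝ × ℝ → ℂ := Function.uncurry u with hU
  have hpi : (0:ℝ) < 2 * π := by positivity
  have hsin : ∀ r ∈ Ioo (0:ℝ) R, 0 < Real.sin r := fun r hr =>
    Real.sin_pos_of_pos_of_lt_pi hr.1 (hr.2.trans hR.2)
  have hdiff : ∀ p ∈ Ioo (0:ℝ) R ×ˢ (univ : Set ℝ), HasFDerivAt U (fderiv ℝ U p) p := fun p hp =>
    ((hsm.differentiableOn (by simp)) p hp |>.differentiableAt (hopen.mem_nhds hp)).hasFDerivAt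
  have hfd : ContinuousOn (fderiv ℝ U) (Ioo (0:ℝ) R ×ˢ (univ : Set ℝ)) :=
    hsm.continuousOn_fderiv_of_isOpen hopen (by simp)
  have hdr : ∀ p ∈ Ioo (0:ℝ) R ×ˢ (univ : Set ℝ),
      HasDerivAt (fun s => u s p.2) (fderiv ℝ U p (1, 0)) p.1 := by
    intro p hp
    have h := (hdiff p hp).comp_hasDerivAt p.1 ((hasDerivAt_id p.1).prodMk (hasDerivAt_const p.1 p.2))
    exact h
  have hdt : ∀ p ∈ Ioo (0:ℝ) R ×ˢ (univ : Set ℝ),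
      HasDerivAt (fun t => u p.1 t) (fderiv ℝ U p (0, 1)) p.2 := by
    intro p hp
    have h := (hdiff p hp).comp_hasDerivAt p.2 ((hasDerivAt_const p.2 p.1).prodMk (hasDerivAt_id p.2))
    exact h
  have hUc : ContinuousOn U (Ioo (0:ℝ) R ×ˢ (univ : Set ℝ)) := hsm.continuousOn
  have hDr : ContinuousOn (fun p : ℝ × ℝ => deriv (fun s => u s p.2) p.1)
      (Ioo (0:ℝ) R ×ˢ (univ : Set ℝ)) :=
    (hfd.clm_apply continuousOn_const).congr fun p hp => (hdr p hp).deriv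
  have hDt : ContinuousOn (fun p : ℝ × ℝ => deriv (fun t => u p.1 t) p.2)
      (Ioo (0:ℝ) R ×ˢ (univ : Set ℝ)) :=
    (hfd.clm_apply continuousOn_const).congr fun p hp => (hdt p hp).deriv
  have hsc : ContinuousOn (fun p : ℝ × ℝ => Real.sin p.1) (Ioo (0:ℝ) R ×ˢ (univ : Set ℝ)) := by
    fun_prop
  have hs0 : ∀ p ∈ Ioo (0:ℝ) R ×ˢ (univ : Set ℝ), Real.sin p.1 ≠ 0 := fun p hp => (hsin _ hp.1).ne'
  set S := Ioo (0:ℝ) R ×ˢ Ioo (0:ℝ) (2 * π) with hS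
  have hSm : MeasurableSet S := measurableSet_Ioo.prod measurableSet_Ioo
  have hSsub : S ⊆ Ioo (0:ℝ) R ×ˢ (univ : Set ℝ) := prod_mono_right (subset_univ _)
  set E1 : ℝ × ℝ → ℝ := fun p => ‖deriv (fun s => u s p.2) p.1‖ ^ 2 * Real.sin p.1 with hE1
  set E2 : ℝ × ℝ → ℝ := fun p =>
    ‖deriv (fun t => u p.1 t) p.2 - Complex.I * (ν : ℂ) * u p.1 p.2‖ ^ 2 / Real.sin p.1 with hE2
  set W : ℝ × ℝ → ℝ := fun p => ‖u p.1 p.2‖ ^ 2 / Real.sin p.1 with hW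
  set N : ℝ × ℝ → ℝ := fun p => ‖u p.1 p.2‖ ^ 2 * Real.sin p.1 with hNd
  have hE1c : ContinuousOn E1 (Ioo (0:ℝ) R ×ˢ (univ : Set ℝ)) := (hDr.norm.pow 2).mul hsc
  have hE2c : ContinuousOn E2 (Ioo (0:ℝ) R ×ˢ (univ : Set ℝ)) :=
    ((hDt.sub (continuousOn_const.mul hUc)).norm.pow 2).div hsc hs0
  have hWc : ContinuousOn W (Ioo (0:ℝ) R ×ˢ (univ : Set ℝ)) := (hUc.norm.pow 2).div hsc hs0
  have hNc : ContinuousOn N (Ioo (0:ℝ) R ×ˢ (univ : Set ℝ)) := (hUc.norm.pow 2).mul hsc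
  have hEsum : ∀ p ∈ S, magEnergyIntegrand ν u p = E1 p + E2 p := by
    intro p hp
    have := hs0 p (hSsub hp)
    simp only [magEnergyIntegrand, hE1, hE2]
    field_simp
  have hE1i : IntegrableOn E1 S := by
    refine Integrable.mono' hE ((hE1c.mono hSsub).aestronglyMeasurable hSm) ?_
    filter_upwards [ae_restrict_mem hSm] with p hp
    have := hsin _ hp.1
    have h1 : 0 ≤ E1 p := by simp only [hE1]; positivity
    have h2 : 0 ≤ E2 p := by simp only [hE2]; positivity
    rw [hEsum p hp, Real.norm_eq_abs, abs_of_nonneg h1]; linarith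
  have hE2i : IntegrableOn E2 S := by
    refine Integrable.mono' hE ((hE2c.mono hSsub).aestronglyMeasurable hSm) ?_
    filter_upwards [ae_restrict_mem hSm] with p hp
    have := hsin _ hp.1
    have h1 : 0 ≤ E1 p := by simp only [hE1]; positivity
    have h2 : 0 ≤ E2 p := by simp only [hE2]; positivity
    rw [hEsum p hp, Real.norm_eq_abs, abs_of_nonneg h2]; linarith
  have hEint : ∫ p in S, magEnergyIntegrand ν u p = (∫ p in S, E1 p) + ∫ p in S, E2 p := by
    rw [setIntegral_congr_fun hSm hEsum]
    exact integral_add hE1i hE2i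
  set μ := (volume : Measure ℝ).restrict (Ioo 0 R) with hμ
  set η := (volume : Measure ℝ).restrict (Ioo 0 (2 * π)) with hη
  have hvol : (volume : Measure (ℝ × ℝ)).restrict S = μ.prod η := by
    rw [hμ, hη, Measure.prod_restrict]; rfl
  have hWsl : ∀ r ∈ Ioo (0:ℝ) R, Continuous (fun t => u r t) := by
    intro r hr
    exact hUc.comp_continuous (f := fun t : ℝ => ((r, t) : ℝ × ℝ)) (by fun_prop) (fun t => ⟨hr, mem_univ _⟩)
  have hDsl : ∀ r ∈ Ioo (0:ℝ) R, Continuous (fun t => deriv (fun t => u r t) t) := by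
    intro r hr
    exact hDt.comp_continuous (f := fun t : ℝ => ((r, t) : ℝ × ℝ)) (by fun_prop) (fun t => ⟨hr, mem_univ _⟩)
  have hslice : ∀ r ∈ Ioo (0:ℝ) R, ν ^ 2 * ∫ t, W (r, t) ∂η ≤ ∫ t, E2 (r, t) ∂η := by
    intro r hr
    have h := ab_wirtinger ν hν (fun t => u r t) (fun t => deriv (fun t => u r t) t)
      (fun t => (hdt (r, t) ⟨hr, mem_univ _⟩).differentiableAt.hasDerivAt) (hDsl r hr)
      (by simpa using hper r 0)
    simp only [hW, hE2, integral_div]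
    rw [← mul_div_assoc]
    have := hsin r hr
    gcongr
  have hWm : AEStronglyMeasurable W (μ.prod η) := by
    rw [← hvol]; exact (hWc.mono hSsub).aestronglyMeasurable hSm
  have hE2i' := hE2i
  have hE1i' := hE1i
  have hN' := hN
  rw [IntegrableOn, hvol] at hE2i' hE1i' hN'
  have hWi : Integrable W (μ.prod η) := by
    rw [integrable_prod_iff hWm]
    constructor
    · filter_upwards [ae_restrict_mem measurableSet_Ioo] with r hr
      have : Continuous (fun t => W (r, t)) := by
        have := hWsl r hr
        simp only [hW]
        fun_prop
      exact (this.integrableOn_Icc (a := 0) (b := 2 * π)).mono_set Ioo_subset_Icc_self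
    · refine Integrable.mono' (hE2i'.integral_prod_left.const_mul (ν ^ 2)⁻¹)
        hWm.norm.integral_prod_right' ?_
      filter_upwards [ae_restrict_mem measurableSet_Ioo] with r hr
      have hs := hsin r hr
      have e : ∀ t, ‖W (r, t)‖ = W (r, t) := fun t => by
        rw [Real.norm_eq_abs, abs_of_nonneg]; simp only [hW]; positivity
      simp only [e]
      rw [Real.norm_eq_abs, abs_of_nonneg (integral_nonneg fun t => by simp only [hW]; positivity)]
      have := hν.1
      rw [← div_eq_inv_mul, le_div_iff₀ (by positivity), mul_comm]
      exact hslice r hr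
  have hE2W : ν ^ 2 * ∫ p in S, W p ≤ ∫ p in S, E2 p := by
    rw [hvol, integral_prod _ hWi, integral_prod _ hE2i', ← integral_const_mul]
    refine integral_mono_ae (hWi.integral_prod_left.const_mul _) hE2i'.integral_prod_left ?_
    filter_upwards [ae_restrict_mem measurableSet_Ioo] with r hr using hslice r hr
  have hmain : ν * (ν + 1) * ∫ p in S, N p ≤ (∫ p in S, E1 p) + ν ^ 2 * ∫ p in S, W p := by
    rw [hvol, integral_prod_symm _ hWi, integral_prod_symm _ hE1i', integral_prod_symm _ hN',
      ← integral_const_mul, ← integral_const_mul,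
      ← integral_add hE1i'.integral_prod_right (hWi.integral_prod_right.const_mul _)]
    refine integral_mono_ae (hN'.integral_prod_right.const_mul _)
      (hE1i'.integral_prod_right.add (hWi.integral_prod_right.const_mul _)) ?_
    filter_upwards [hN'.prod_left_ae, hE1i'.prod_left_ae, hWi.prod_left_ae] with t h1 h2 h3
    refine radial_ineq ν hν R hR (fun r => u r t) ?_ (hvan R (by linarith) t) h2 h3 h1
    intro r hr
    rcases hr.2.lt_or_eq with h | h
    · exact (hdr (r, t) ⟨⟨hr.1, h⟩, mem_univ _⟩).differentiableAt
    · have : (fun r => u r t) =ᶠ[nhds r] fun _ => 0 := by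
        filter_upwards [Ioi_mem_nhds (show R - ε < r by linarith)] with s hs using hvan s hs t
      exact (differentiableAt_const _).congr_of_eventuallyEq this
  have hNpos : 0 < ∫ p in S, N p := by
    push Not at hnz
    obtain ⟨r, hr, θ, hθ⟩ := hnz
    have hP : Function.Periodic (u r) (2 * π) := hper r
    obtain ⟨θ', hθ', hθe⟩ := hP.exists_mem_Ico₀ hpi θ
    rw [hθe] at hθ
    have hex : ∃ t ∈ Ioo (0:ℝ) (2 * π), u r t ≠ 0 := by
      have h1 : ∀ᶠ t in nhdsWithin θ' (Ioi θ'), u r t ≠ 0 :=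
        ((hWsl r hr).continuousAt.eventually_ne hθ).filter_mono nhdsWithin_le_nhds
      obtain ⟨t, h2, h3⟩ := (h1.and (Ioo_mem_nhdsGT hθ'.2)).exists
      exact ⟨t, ⟨hθ'.1.trans_lt h3.1, h3.2⟩, h2⟩
    obtain ⟨t, ht, hut⟩ := hex
    have hNn : ∀ p ∈ S, 0 ≤ N p := fun p hp => by
      have := hsin _ hp.1
      simp only [hNd]; positivity
    rw [setIntegral_pos_iff_support_of_nonneg_ae
      ((ae_restrict_mem hSm).mono hNn) hN]
    have hSo : IsOpen S := isOpen_Ioo.prod isOpen_Ioo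
    have ho : IsOpen (S ∩ N ⁻¹' {0}ᶜ) :=
      (hNc.mono hSsub).isOpen_inter_preimage hSo isOpen_compl_singleton
    have : Function.support N ∩ S = S ∩ N ⁻¹' {0}ᶜ := by
      rw [inter_comm]; rfl
    rw [this]
    refine ho.measure_pos _ ⟨(r, t), ⟨hr, ht⟩, ?_⟩
    have := hsin r hr
    simp only [hNd, mem_preimage, mem_compl_iff, mem_singleton_iff]
    have := norm_pos_iff.2 hut
    positivity
  rw [magQuot, le_div_iff₀ hNpos, hEint]
  linarith

theorem sin_rpow_integrable (ν : ℝ) (hν : 0 < ν) (R : ℝ) (hR : R ∈ Ioo (0:ℝ) π) :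
    IntervalIntegrable (fun r => Real.sin r ^ (2 * ν - 1)) volume 0 R := by
  have h1 : IntervalIntegrable (fun r : ℝ => r ^ (2 * ν - 1)) volume 0 R :=
    intervalIntegral.intervalIntegrable_rpow' (by linarith)
  have hpos : ∀ x ∈ Icc 0 R, 0 < Real.sinc x := by
    intro x hx
    rcases hx.1.eq_or_lt with h | h
    · rw [← h]; simp
    · rw [Real.sinc_of_ne_zero h.ne']
      exact div_pos (Real.sin_pos_of_pos_of_lt_pi h (hx.2.trans_lt hR.2)) h
  have h2 : ContinuousOn (fun x => Real.sinc x ^ (2 * ν - 1)) (uIcc 0 R) := by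
    rw [uIcc_of_le hR.1.le]
    exact Real.continuous_sinc.continuousOn.rpow_const fun x hx => Or.inl (hpos x hx).ne'
  refine (h1.mul_continuousOn h2).congr ?_
  intro x hx
  rw [uIoc_of_le hR.1.le] at hx
  have := hpos x ⟨hx.1.le, hx.2⟩
  have hx0 : 0 < x := hx.1
  simp only
  rw [← Real.mul_rpow hx0.le this.le, Real.sinc_of_ne_zero hx0.ne']
  congr 1
  field_simp

theorem test_fun (ν : ℝ) (hν : ν ∈ Ioc (0:ℝ) (1/2)) (R : ℝ) (hR : R ∈ Ioo (0:ℝ) π)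
    (χ : ℝ → ℝ) (hχ : ContDiff ℝ (⊤ : ℕ∞) χ) (a b : ℝ) (ha : 0 < a) (hab : a < b) (hbR : b < R)
    (h1 : ∀ r ≤ a, χ r = 1) (h0 : ∀ r, b ≤ r → χ r = 0) :
    ∃ u, DirAdmissible R ν u ∧ 
      IntegrableOn (fun r => (Real.sin r ^ ν) ^ 2 * Real.sin r * χ r ^ 2) (Ioo 0 R) ∧
      0 < (∫ r in Ioo 0 R, (Real.sin r ^ ν) ^ 2 * Real.sin r * χ r ^ 2) ∧
      magQuot R ν u = ν * (ν + 1) +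
      (∫ r in Ioo 0 R, (Real.sin r ^ ν) ^ 2 * Real.sin r * deriv χ r ^ 2) /
      (∫ r in Ioo 0 R, (Real.sin r ^ ν) ^ 2 * Real.sin r * χ r ^ 2) := by
  have hν0 := hν.1
  have hR0 := hR.1
  have hpi : (0:ℝ) < 2 * π := by positivity
  have hsin : ∀ r ∈ Ioo (0:ℝ) R, 0 < Real.sin r := fun r hr =>
    Real.sin_pos_of_pos_of_lt_pi hr.1 (hr.2.trans hR.2)
  have hχc : Continuous χ := hχ.continuous
  have hχd : Continuous (deriv χ) := hχ.continuous_deriv (by simp)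
  have hχD : ∀ r, HasDerivAt χ (deriv χ r) r := fun r =>
    ((hχ.differentiable (by simp)) r).hasDerivAt
  set Q : ℝ → ℝ := fun r => Real.sin r ^ (2 * ν - 1) with hQ
  have hQi : ∀ g : ℝ → ℝ, Continuous g → IntegrableOn (fun r => Q r * g r) (Ioo 0 R) := by
    intro g hg
    exact (intervalIntegrable_iff_integrableOn_Ioo_of_le hR0.le).1
      ((sin_rpow_integrable ν hν0 R hR).mul_continuousOn hg.continuousOn)
  have hPQ : ∀ r ∈ Ioo (0:ℝ) R, (Real.sin r ^ ν) ^ 2 = Q r * Real.sin r := by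
    intro r hr
    have := hsin r hr
    simp only [hQ]
    rw [← Real.rpow_add_one this.ne', ← Real.rpow_natCast, ← Real.rpow_mul this.le]
    congr 1
    push_cast; ring
  set v : ℝ → ℝ := fun r => Real.sin r ^ ν * χ r with hv
  set v' : ℝ → ℝ := fun r => Real.sin r ^ ν * (ν * Real.cos r * χ r / Real.sin r + deriv χ r) with hv'
  have hvd : ∀ r ∈ Ioo (0:ℝ) R, HasDerivAt v (v' r) r := by
    intro r hr
    have hs := hsin r hr
    have := ((Real.hasDerivAt_sin r).rpow_const (p := ν) (Or.inl hs.ne')).mul (hχD r)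
    refine this.congr_deriv ?_
    rw [Real.rpow_sub_one hs.ne']
    simp only [hv']
    ring
  set G' : ℝ → ℝ := fun r => ν * (-Real.sin r * v r ^ 2 + Real.cos r * (2 * v r * v' r)) with hG'
  set e : ℝ → ℝ := fun r => v' r ^ 2 * Real.sin r + ν ^ 2 * v r ^ 2 / Real.sin r with he
  set T : ℝ → ℝ := fun r => (Real.sin r ^ ν) ^ 2 * Real.sin r * deriv χ r ^ 2 with hT
  set N : ℝ → ℝ := fun r => (Real.sin r ^ ν) ^ 2 * Real.sin r * χ r ^ 2 with hN
  have hNi : IntegrableOn N (Ioo 0 R) := by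
    refine (hQi (fun r => Real.sin r ^ 2 * χ r ^ 2) (by fun_prop)).congr_fun ?_ measurableSet_Ioo
    intro r hr
    simp only [hN, hPQ r hr]; ring
  have hTi : IntegrableOn T (Ioo 0 R) := by
    refine (hQi (fun r => Real.sin r ^ 2 * deriv χ r ^ 2) (by fun_prop)).congr_fun ?_ measurableSet_Ioo
    intro r hr
    simp only [hT, hPQ r hr]; ring
  have hei : IntegrableOn e (Ioo 0 R) := by
    refine (hQi (fun r => (ν * Real.cos r * χ r + Real.sin r * deriv χ r) ^ 2 + ν ^ 2 * χ r ^ 2)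
      (by fun_prop)).congr_fun ?_ measurableSet_Ioo
    intro r hr
    have hs := (hsin r hr).ne'
    simp only [he, hv, hv', mul_pow, hPQ r hr]
    field_simp
  have hid : ∀ r ∈ Ioo (0:ℝ) R, G' r = e r - T r - ν * (ν + 1) * N r := by
    intro r hr
    have hs := (hsin r hr).ne'
    have hc : Real.cos r ^ 2 = 1 - Real.sin r ^ 2 := by have := Real.sin_sq_add_cos_sq r; linarith
    simp only [hG', he, hT, hN, hv, hv']
    field_simp
    ring_nf
    simp only [hc]
    ring
  have hG'i0 : IntegrableOn (fun r => e r - T r - ν * (ν + 1) * N r) (Ioo 0 R) :=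
    (hei.sub hTi).sub (hNi.const_mul _)
  have hG'i : IntegrableOn G' (Ioo 0 R) :=
    hG'i0.congr_fun (fun r hr => (hid r hr).symm) measurableSet_Ioo
  have hvc : Continuous v := by
    have : Continuous fun r => Real.sin r ^ ν := Real.continuous_sin.rpow_const fun r => Or.inr hν0.le
    exact this.mul hχc
  have hG'0 : ∫ r in Ioo 0 R, G' r = 0 := by
    have := intervalIntegral.integral_eq_sub_of_hasDeriv_right_of_le (a := 0) (b := R) hR0.le
      (f := fun r => ν * (Real.cos r * v r ^ 2)) (f' := G')
      (by fun_prop) (fun x hx => by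
        have h := ((Real.hasDerivAt_cos x).mul ((hvd x hx).pow 2)).const_mul ν
        refine (h.congr_deriv ?_).hasDerivWithinAt
        simp only [hG', Pi.pow_apply]
        push_cast
        ring)
      ((intervalIntegrable_iff_integrableOn_Ioo_of_le hR0.le).2 hG'i)
    rw [intervalIntegral.integral_of_le hR0.le, integral_Ioc_eq_integral_Ioo] at this
    rw [this]
    simp [hv, h0 R hbR.le, Real.zero_rpow hν0.ne']
  have heint : ∫ r in Ioo 0 R, e r = (∫ r in Ioo 0 R, T r) + ν * (ν + 1) * ∫ r in Ioo 0 R, N r := by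
    have h := setIntegral_congr_fun measurableSet_Ioo hid (μ := volume)
    have e1 := integral_sub (hei.sub hTi) (hNi.const_mul (ν * (ν + 1)))
    have e2 := integral_sub hei hTi
    simp only [Pi.sub_apply] at e1
    simp only [integral_const_mul] at e1
    rw [hG'0, e1, e2] at h
    linarith
  have hNpos : 0 < ∫ r in Ioo 0 R, N r := by
    rw [setIntegral_pos_iff_support_of_nonneg_ae ?_ hNi]
    · refine lt_of_lt_of_le ?_ (measure_mono (s := Ioo 0 a) ?_)
      · simp [ha]
      · intro r hr
        have hr' : r ∈ Ioo 0 R := ⟨hr.1, hr.2.trans (hab.trans hbR)⟩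
        refine ⟨?_, hr'⟩
        have := hsin r hr'
        simp only [hN, Function.mem_support, h1 r hr.2.le]
        positivity
    · filter_upwards [ae_restrict_mem measurableSet_Ioo] with r hr
      have := hsin r hr
      simp only [hN, Pi.zero_apply]; positivity
  set u : ℝ → ℝ → ℂ := fun r _ => (v r : ℂ) with hu
  set S := Ioo (0:ℝ) R ×ˢ Ioo (0:ℝ) (2 * π) with hS
  have hSm : MeasurableSet S := measurableSet_Ioo.prod measurableSet_Ioo
  set μ := (volume : Measure ℝ).restrict (Ioo 0 R) with hμ
  set η := (volume : Measure ℝ).restrict (Ioo 0 (2 * π)) with hη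
  have hvol : (volume : Measure (ℝ × ℝ)).restrict S = μ.prod η := by
    rw [hμ, hη, Measure.prod_restrict]; rfl
  have hηr : η.real univ = 2 * π := by
    rw [hη]; simp [Measure.real, Real.pi_pos.le]
  have hEe : ∀ p ∈ S, magEnergyIntegrand ν u p = e p.1 := by
    intro p hp
    have hs := (hsin _ hp.1).ne'
    have hd : deriv (fun s => u s p.2) p.1 = ((v' p.1 : ℝ) : ℂ) := (hvd _ hp.1).ofReal_comp.deriv
    simp only [magEnergyIntegrand, hd]
    simp only [hu, deriv_const, zero_sub, norm_neg, norm_mul, Complex.norm_I, Complex.norm_real,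
      one_mul, mul_pow, Real.norm_eq_abs, sq_abs, he]
    field_simp
  have hNe : ∀ p ∈ S, ‖u p.1 p.2‖ ^ 2 * Real.sin p.1 = N p.1 := by
    intro p hp
    simp only [hu, hN, hv, Complex.norm_real, Real.norm_eq_abs, sq_abs, mul_pow]
    ring
  have hEi : IntegrableOn (fun p : ℝ × ℝ => e p.1) S := by
    rw [IntegrableOn, hvol]; exact Integrable.comp_fst hei η
  have hNi2 : IntegrableOn (fun p : ℝ × ℝ => N p.1) S := by
    rw [IntegrableOn, hvol]; exact Integrable.comp_fst hNi η
  refine ⟨u, ⟨⟨?_, ?_, ?_, ?_, ?_⟩, R - b, by linarith, ?_⟩, hNi, hNpos, ?_⟩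
  · have hvs : ContDiffOn ℝ (⊤ : ℕ∞) v (Ioo 0 R) := by
      refine ContDiffOn.mul ?_ hχ.contDiffOn
      intro r hr
      exact (Real.contDiff_sin.contDiffAt.rpow_const_of_ne (hsin r hr).ne').contDiffWithinAt
    have : Function.uncurry u = Complex.ofRealCLM ∘ v ∘ Prod.fst := rfl
    rw [this]
    refine Complex.ofRealCLM.contDiff.comp_contDiffOn ?_
    exact hvs.comp contDiff_fst.contDiffOn (fun p hp => hp.1)
  · intro r θ; rfl
  · push Not
    have hr' : a ∈ Ioo 0 R := ⟨ha, hab.trans hbR⟩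
    refine ⟨a, hr', 0, ?_⟩
    have := hsin a hr'
    simp only [hu, hv, h1 a le_rfl]
    norm_cast
    positivity
  · exact hEi.congr_fun (fun p hp => (hEe p hp).symm) hSm
  · exact hNi2.congr_fun (fun p hp => (hNe p hp).symm) hSm
  · intro r hr θ
    simp [hu, hv, h0 r (by linarith)]
  · rw [magQuot, setIntegral_congr_fun hSm hEe, setIntegral_congr_fun hSm hNe, hvol,
      integral_fun_fst, integral_fun_fst, hηr, heint]
    simp only [smul_eq_mul]
    have := hNpos.ne'
    have := hpi.ne'
    field_simp
    ring

theorem deriv_smoothTransition_bound : ∃ C : ℝ, 0 < C ∧ ∀ x, |deriv Real.smoothTransition x| ≤ C := by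
  have hc : Continuous (deriv Real.smoothTransition) :=
    (Real.smoothTransition.contDiff (n := 1)).continuous_deriv le_rfl
  obtain ⟨C, hC⟩ := isCompact_Icc.exists_bound_of_continuousOn (s := Icc (0:ℝ) 1) hc.continuousOn
  refine ⟨max C 1, by positivity, fun x => ?_⟩
  by_cases hx : x ∈ Icc (0:ℝ) 1
  · exact (hC x hx).trans (le_max_left _ _)
  · have : deriv Real.smoothTransition x = 0 := by
      rw [mem_Icc, not_and_or, not_le, not_le] at hx
      rcases hx with hx | hx
      · have : Real.smoothTransition =ᶠ[nhds x] fun _ => 0 := by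
          filter_upwards [Iio_mem_nhds hx] with y hy using Real.smoothTransition.zero_of_nonpos (le_of_lt hy)
        rw [this.deriv_eq]; simp
      · have : Real.smoothTransition =ᶠ[nhds x] fun _ => 1 := by
          filter_upwards [Ioi_mem_nhds hx] with y hy using Real.smoothTransition.one_of_one_le (le_of_lt hy)
        rw [this.deriv_eq]; simp
    rw [this]; simp

theorem cutoff (a b : ℝ) (hab : a < b) : ∃ χ : ℝ → ℝ, ContDiff ℝ (⊤ : ℕ∞) χ ∧
    (∀ r ≤ a, χ r = 1) ∧ (∀ r, b ≤ r → χ r = 0) ∧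
    ∀ C, (∀ x, |deriv Real.smoothTransition x| ≤ C) → ∀ r, |deriv χ r| ≤ C / (b - a) := by
  have hd : 0 < b - a := by linarith
  refine ⟨fun r => Real.smoothTransition ((b - r) / (b - a)), ?_, ?_, ?_, ?_⟩
  · exact Real.smoothTransition.contDiff.comp (by fun_prop)
  · intro r hr
    apply Real.smoothTransition.one_of_one_le
    rw [le_div_iff₀ hd]; linarith
  · intro r hr
    apply Real.smoothTransition.zero_of_nonpos
    exact div_nonpos_of_nonpos_of_nonneg (by linarith) hd.le
  · intro C hC r
    have h1 : HasDerivAt Real.smoothTransition (deriv Real.smoothTransition ((b - r) / (b - a)))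
        ((b - r) / (b - a)) :=
      ((Real.smoothTransition.contDiff (n := 1)).differentiable (by simp) _).hasDerivAt
    have h2 : HasDerivAt (fun r => (b - r) / (b - a)) (-1 / (b - a)) r :=
      ((hasDerivAt_id r).const_sub b).div_const _
    have h3 := (h1.comp r h2).deriv
    rw [Function.comp_def] at h3
    rw [h3, abs_mul, abs_div, abs_neg, abs_one, abs_of_pos hd, mul_one_div]
    have := hC ((b - r) / (b - a))
    gcongr

theorem lam_upper (ν : ℝ) (hν : ν ∈ Ioc (0:ℝ) (1/2)) : ∃ K : ℝ, ∀ d ∈ Ioo (0:ℝ) (π / 6),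
    ∃ u, DirAdmissible (π - d) ν u ∧ magQuot (π - d) ν u ≤ ν * (ν + 1) + K * d ^ (2 * ν) := by
  obtain ⟨C, hC0, hC⟩ := deriv_smoothTransition_bound
  have hν0 := hν.1
  set c0 := ∫ r in Ioo 0 (π / 2), (Real.sin r ^ ν) ^ 2 * Real.sin r with hc0
  have hpi := Real.pi_pos
  have hcont : Continuous fun r => (Real.sin r ^ ν) ^ 2 * Real.sin r := by
    have : Continuous fun r => Real.sin r ^ ν := Real.continuous_sin.rpow_const fun r => Or.inr hν0.le
    fun_prop
  have hc0i : IntegrableOn (fun r => (Real.sin r ^ ν) ^ 2 * Real.sin r) (Ioo 0 (π / 2)) :=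
    (hcont.integrableOn_Icc (a := 0) (b := π / 2)).mono_set Ioo_subset_Icc_self
  have hc0pos : 0 < c0 := by
    rw [hc0, setIntegral_pos_iff_support_of_nonneg_ae ?_ hc0i]
    · refine lt_of_lt_of_le ?_ (measure_mono (s := Ioo 0 (π / 2)) ?_)
      · simp [hpi]
      · intro r hr
        refine ⟨?_, hr⟩
        have := Real.sin_pos_of_pos_of_lt_pi hr.1 (by linarith [hr.2])
        simp only [Function.mem_support]
        positivity
    · filter_upwards [ae_restrict_mem measurableSet_Ioo] with r hr
      have := Real.sin_pos_of_pos_of_lt_pi hr.1 (by linarith [hr.2])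
      simp only [Pi.zero_apply]; positivity
  refine ⟨C ^ 2 * 3 ^ (2 * ν + 1) / c0, fun d hd => ?_⟩
  obtain ⟨hd0, hd6⟩ := hd
  have hR : π - d ∈ Ioo 0 π := ⟨by linarith, by linarith⟩
  obtain ⟨χ, hχ, h1, h0, hb⟩ := cutoff (π - 3 * d) (π - 2 * d) (by linarith)
  have hb := hb C hC
  obtain ⟨u, hu, hNi, hNpos, hq⟩ := test_fun ν hν (π - d) hR χ hχ (π - 3 * d) (π - 2 * d)
    (by linarith) (by linarith) (by linarith) h1 h0
  refine ⟨u, hu, ?_⟩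
  rw [hq]
  have hsin : ∀ r ∈ Ioo (0:ℝ) (π - d), 0 < Real.sin r := fun r hr =>
    Real.sin_pos_of_pos_of_lt_pi hr.1 (by linarith [hr.2])
  have hN : c0 ≤ ∫ r in Ioo 0 (π - d), (Real.sin r ^ ν) ^ 2 * Real.sin r * χ r ^ 2 := by
    calc c0 = ∫ r in Ioo 0 (π / 2), (Real.sin r ^ ν) ^ 2 * Real.sin r * χ r ^ 2 := by
          refine setIntegral_congr_fun measurableSet_Ioo fun r hr => ?_
          simp only [h1 r (by linarith [hr.2])]; ring
      _ ≤ _ := by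
          refine setIntegral_mono_set hNi ?_ ?_
          · filter_upwards [ae_restrict_mem measurableSet_Ioo] with r hr
            have := hsin r hr
            simp only [Pi.zero_apply]; positivity
          · exact (Ioo_subset_Ioo_right (by linarith)).eventuallyLE
  have hT : ∫ r in Ioo 0 (π - d), (Real.sin r ^ ν) ^ 2 * Real.sin r * deriv χ r ^ 2
      ≤ C ^ 2 * 3 ^ (2 * ν + 1) * d ^ (2 * ν) := by
    rw [setIntegral_eq_of_subset_of_forall_sdiff_eq_zero (s := Icc (π - 3 * d) (π - 2 * d))
      (t := Ioo 0 (π - d)) measurableSet_Ioo (fun r hr => ⟨by linarith [hr.1], by linarith [hr.2]⟩) ?_]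
    · have hbd := norm_setIntegral_le_of_norm_le_const (μ := volume)
        (s := Icc (π - 3 * d) (π - 2 * d)) (C := (3 * d) ^ (2 * ν + 1) * (C / d) ^ 2)
        (f := fun r => (Real.sin r ^ ν) ^ 2 * Real.sin r * deriv χ r ^ 2)
        (by simp) ?_
      · refine (le_abs_self _).trans (hbd.trans (le_of_eq ?_))
        rw [Measure.real, Real.volume_Icc, ENNReal.toReal_ofReal (by linarith),
          Real.mul_rpow (by norm_num) hd0.le, Real.rpow_add_one hd0.ne']
        field_simp
        ring
      · intro r hr
        have hr' : r ∈ Ioo 0 (π - d) := ⟨by linarith [hr.1], by linarith [hr.2]⟩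
        have hs := hsin r hr'
        have hs3 : Real.sin r ≤ 3 * d := by
          rw [← Real.sin_pi_sub]
          exact (Real.sin_le (by linarith [hr'.2])).trans (by linarith [hr.1])
        have e1 : (Real.sin r ^ ν) ^ 2 * Real.sin r = Real.sin r ^ (2 * ν + 1) := by
          rw [Real.rpow_add_one hs.ne', ← Real.rpow_natCast, ← Real.rpow_mul hs.le]
          congr 2
          push_cast; ring
        have hb' := hb r
        have e2 : π - 2 * d - (π - 3 * d) = d := by ring
        rw [e2] at hb'
        rw [Real.norm_eq_abs, abs_of_nonneg (by positivity), e1, ← sq_abs (deriv χ r)]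
        gcongr
    · intro r hr
      have hz : deriv χ r = 0 := by
        have hx := hr.2
        rw [mem_Icc, not_and_or, not_le, not_le] at hx
        rcases hx with hx | hx
        · have : χ =ᶠ[nhds r] fun _ => 1 := by
            filter_upwards [Iio_mem_nhds hx] with y hy using h1 y (le_of_lt hy)
          rw [this.deriv_eq]; simp
        · have : χ =ᶠ[nhds r] fun _ => 0 := by
            filter_upwards [Ioi_mem_nhds hx] with y hy using h0 y (le_of_lt hy)
          rw [this.deriv_eq]; simp
      simp [hz]
  have : (∫ r in Ioo 0 (π - d), (Real.sin r ^ ν) ^ 2 * Real.sin r * deriv χ r ^ 2) /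
      (∫ r in Ioo 0 (π - d), (Real.sin r ^ ν) ^ 2 * Real.sin r * χ r ^ 2)
      ≤ C ^ 2 * 3 ^ (2 * ν + 1) * d ^ (2 * ν) / c0 := by
    gcongr
  rw [div_mul_eq_mul_div]
  linarith

/-- The first magnetic Dirichlet eigenvalue `Λ(R) = λ₁(D_R, A^{(ν)}_{x₀})` of geodesic
disks satisfies `Λ(R) ≥ ν(ν+1)` for all `R ∈ (0, π)` and converges to
`μ₁(S², A^{(ν)}_{x₀}) = ν(ν+1)` as `R → π⁻`. -/
theorem dirichlet_disk_eigenvalue_limit (ν : ℝ) (hν : ν ∈ Ioc (0:ℝ) (1/2)) :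
    (∀ R ∈ Ioo (0:ℝ) π, ν * (ν + 1) ≤ Lam ν R) ∧
    Tendsto (Lam ν) (nhdsWithin π (Iio π)) (nhds (ν * (ν + 1))) := by
  have hlow : ∀ R ∈ Ioo (0:ℝ) π, ∀ q ∈ { q | ∃ u : ℝ → ℝ → ℂ, DirAdmissible R ν u ∧ q = magQuot R ν u },
      ν * (ν + 1) ≤ q := by
    rintro R hR q ⟨u, hu, rfl⟩
    exact mag_lower ν hν R hR u hu
  have hmain : ∀ R ∈ Ioo (0:ℝ) π, ν * (ν + 1) ≤ Lam ν R := by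
    intro R hR
    refine le_csInf ?_ (hlow R hR)
    have hR0 := hR.1
    obtain ⟨χ, hχ, h1, h0, -⟩ := cutoff (R / 3) (R / 2) (by linarith)
    obtain ⟨u, hu, -⟩ := test_fun ν hν R hR χ hχ (R / 3) (R / 2) (by linarith) (by linarith)
      (by linarith) h1 h0
    exact ⟨_, u, hu, rfl⟩
  refine ⟨hmain, ?_⟩
  obtain ⟨K, hK⟩ := lam_upper ν hν
  have hpi := Real.pi_pos
  have hlim : Tendsto (fun R : ℝ => ν * (ν + 1) + K * (π - R) ^ (2 * ν)) (nhdsWithin π (Iio π))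
      (nhds (ν * (ν + 1))) := by
    have hc : Continuous (fun R : ℝ => ν * (ν + 1) + K * (π - R) ^ (2 * ν)) := by
      have : Continuous fun R : ℝ => (π - R) ^ (2 * ν) :=
        (continuous_const.sub continuous_id).rpow_const fun r => Or.inr (by linarith [hν.1])
      fun_prop
    have h := (hc.tendsto π).mono_left (nhdsWithin_le_nhds (s := Iio π))
    have h2 : (2 * ν) ≠ 0 := by have := hν.1; positivity
    simpa [Real.zero_rpow h2] using h
  refine tendsto_of_tendsto_of_tendsto_of_le_of_le' tendsto_const_nhds hlim ?_ ?_
  · filter_upwards [Ioo_mem_nhdsLT hpi] with R hR using hmain R hR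
  · filter_upwards [Ioo_mem_nhdsLT (show π - π / 6 < π by linarith)] with R hR
    obtain ⟨u, hu, hq⟩ := hK (π - R) ⟨by linarith [hR.2], by linarith [hR.1]⟩
    rw [sub_sub_cancel] at hu hq
    refine le_trans (csInf_le ⟨_, hlow R ⟨by linarith [hR.1], hR.2⟩⟩ ⟨u, hu, rfl⟩) hq
end
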